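/- Let ℓ ≥ 2 and S = ℂ[z_1,…,z_ℓ]. Let α_1,…,α_m (m ≥ 2) be pairwise non-proportional nonzero linear forms on ℂ^ℓ, all of which lie in the two-dimensional subspace of the dual space spanned by α_1 and α_2. Then the Jacobian ideal J(∏_{i=1}^m α_i) is a primary ideal of S whose radical is the prime ideal (α_1, α_2). -/

import Mathlib

/-!
All the forms are binary forms in `α₁, α₂`, so their product is `F (α₁, α₂)` for a product `F` of
pairwise non-proportional linear forms in two variables. As `α₁, α₂` are linearly independent, the
chain rule can be inverted, and the Jacobian ideal of `F (α₁, α₂)` is the extension of the Jacobian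
ideal of `F` along `ℂ[x, y] → S`, `x ↦ α₁`, `y ↦ α₂` (`jac_aeval_lin`).

In two variables, Euler's identity shows that the partial derivatives of `F` vanish simultaneously
only at the origin, so by the Nullstellensatz the radical of `jac F` is the maximal ideal `(x, y)`
(`radical_jac_two`); an ideal with maximal radical is primary.

Completing `α₁, α₂` to a basis of the linear forms exhibits `S` as a polynomial ring over `ℂ[x, y]`
(`exists_ringEquiv_comp_C`). Extension to a polynomial ring preserves primary ideals and commutes
with their radicals (`isPrimary_map_of_ringEquiv`): if the zero divisors of a ring are nilpotent,
then so are those of any polynomial ring over it (`bot_isPrimary_mvPolynomial`).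
-/

open MvPolynomial

/-- The linear form with coefficient vector `a`, as a polynomial. -/
noncomputable def lin {ℓ : ℕ} (a : Fin ℓ → ℂ) : MvPolynomial (Fin ℓ) ℂ :=
  ∑ k, C (a k) * X k

/-- The Jacobian ideal of a polynomial `Q`, generated by its partial derivatives. -/
noncomputable def jac {ℓ : ℕ} (Q : MvPolynomial (Fin ℓ) ℂ) :
    Ideal (MvPolynomial (Fin ℓ) ℂ) :=
  Ideal.span (Set.range fun k => pderiv k Q)

/-! ### Primary ideals extended to polynomial rings -/

/-- If every zero divisor of `K` is nilpotent, the same holds for polynomials over `K`. If `g` is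
not nilpotent, dropping its nilpotent coefficients gives `g' ≠ 0` whose leading coefficient is a
non-zero-divisor, so `g'` is a non-zero-divisor; as `g' - g` is nilpotent, `g` divides a power
of `g'`. -/
theorem bot_isPrimary_mvPolynomial {K σ : Type*} [CommRing K] [Finite σ]
    (hK : (⊥ : Ideal K).IsPrimary) : (⊥ : Ideal (MvPolynomial σ K)).IsPrimary := by
  classical
  obtain ⟨n, ⟨e⟩⟩ := Finite.exists_equiv_fin σ
  let : LinearOrder σ := LinearOrder.lift' e e.injective
  let m : MonomialOrder σ := MonomialOrder.lex
  rw [Ideal.isPrimary_iff] at hK ⊢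
  obtain ⟨hK1, hK⟩ := hK
  have hK' : ∀ x y : K, x * y = 0 → ¬ IsNilpotent y → x = 0 := fun x y h hy =>
    (hK (Ideal.mem_bot.2 h)).resolve_right hy
  have : Nontrivial K := by
    by_contra h
    rw [not_nontrivial_iff_subsingleton] at h
    exact hK1 (Subsingleton.elim _ _)
  refine ⟨bot_ne_top, fun {f g} hfg => ?_⟩
  rw [Ideal.mem_bot] at hfg ⊢
  change _ ∨ IsNilpotent g
  -- `g'` consists of the terms of `g` with non-nilpotent coefficient.
  let g' : MvPolynomial σ K :=
    ∑ d ∈ g.support.filter (fun d => ¬ IsNilpotent (g.coeff d)), monomial d (g.coeff d)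
  have hcoeff : ∀ d, g'.coeff d = if IsNilpotent (g.coeff d) then 0 else g.coeff d := by
    intro d
    simp only [g', coeff_sum, coeff_monomial, Finset.sum_ite_eq', Finset.mem_filter,
      mem_support_iff]
    by_cases h : IsNilpotent (g.coeff d) <;> simp [h]
    intro h0; rw [h0]
  have hnil : IsNilpotent (g' - g) := by
    rw [MvPolynomial.isNilpotent_iff]
    intro d
    rw [coeff_sub, hcoeff]
    split_ifs with h
    · simpa using h
    · simp
  by_cases hg' : g' = 0
  · right
    simpa [hg'] using hnil
  left
  have hlc : ¬ IsNilpotent (m.leadingCoeff g') := by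
    have h0 : m.leadingCoeff g' ≠ 0 := by simpa using hg'
    unfold MonomialOrder.leadingCoeff at h0 ⊢
    rw [hcoeff] at h0 ⊢
    split_ifs at h0 ⊢ with h
    · exact absurd rfl h0
    · exact h
  have hlc' : m.leadingCoeff g' ∈ nonZeroDivisors K :=
    mem_nonZeroDivisors_iff_right.2 fun x hx => hK' _ _ hx hlc
  have hreg : ∀ h : MvPolynomial σ K, h * g' = 0 → h = 0 := by
    intro h hh
    have := m.leadingCoeff_mul_of_right_mem_nonZeroDivisors (f := h) hlc'
    rw [hh, MonomialOrder.leadingCoeff_zero] at this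
    exact m.leadingCoeff_eq_zero_iff.1 (mem_nonZeroDivisors_iff_right.1 hlc' _ this.symm)
  obtain ⟨k, hk⟩ := hnil
  obtain ⟨c, hc⟩ : g ∣ g' ^ k := by
    have := sub_dvd_pow_sub_pow g' (g' - g) k
    rwa [hk, sub_zero, sub_sub_cancel] at this
  have hz : f * g' ^ k = 0 := by rw [hc, ← mul_assoc, hfg, zero_mul]
  clear hc hk
  induction k with
  | zero => simpa using hz
  | succ k ih => exact ih (hreg _ (by rw [mul_assoc, ← pow_succ, hz]))

/-- The extension of a primary ideal to a polynomial ring is primary: `A[σ] / Q A[σ]` is the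
polynomial ring over `A / Q`. -/
theorem isPrimary_map_C {A σ : Type*} [CommRing A] [Finite σ] {Q : Ideal A}
    (hQ : Q.IsPrimary) : (Q.map (C : A →+* MvPolynomial σ A)).IsPrimary := by
  have h0 : (⊥ : Ideal (A ⧸ Q)).IsPrimary := by
    rw [Ideal.isPrimary_iff] at hQ ⊢
    obtain ⟨h1, h2⟩ := hQ
    have := Ideal.Quotient.nontrivial_iff.2 h1
    refine ⟨bot_ne_top, fun {x y} hxy => ?_⟩
    obtain ⟨x, rfl⟩ := Ideal.Quotient.mk_surjective x
    obtain ⟨y, rfl⟩ := Ideal.Quotient.mk_surjective y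
    rw [← map_mul, Ideal.mem_bot, Ideal.Quotient.eq_zero_iff_mem] at hxy
    refine (h2 hxy).imp (fun h => ?_) fun ⟨n, hn⟩ => ⟨n, ?_⟩
    · rwa [Ideal.mem_bot, Ideal.Quotient.eq_zero_iff_mem]
    · rwa [← map_pow, Ideal.mem_bot, Ideal.Quotient.eq_zero_iff_mem]
  have h := (bot_isPrimary_mvPolynomial (σ := σ) h0).comap (map (Ideal.Quotient.mk Q))
  rwa [← RingHom.ker_eq_comap_bot, MvPolynomial.ker_map, Ideal.mk_ker] at h

theorem isPrime_map_C {A σ : Type*} [CommRing A] {P : Ideal A} (hP : P.IsPrime) :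
    (P.map (C : A →+* MvPolynomial σ A)).IsPrime := by
  have h := RingHom.ker_isPrime (map (σ := σ) (Ideal.Quotient.mk P))
  rwa [MvPolynomial.ker_map, Ideal.mk_ker] at h

theorem radical_map_C {A σ : Type*} [CommRing A] {Q : Ideal A} (hQ : Q.IsPrimary) :
    (Q.map (C : A →+* MvPolynomial σ A)).radical = Q.radical.map C := by
  apply le_antisymm
  · exact (isPrime_map_C (Ideal.isPrime_radical hQ)).radical_le_iff.2 (Ideal.map_mono Ideal.le_radical)
  · exact Ideal.map_radical_le _

/-- Extension along a map `h : A → B` that makes `B` a polynomial ring over `A` preserves primary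
ideals and commutes with taking their radical. -/
theorem isPrimary_map_of_ringEquiv {R A B σ : Type*} [CommRing R] [CommRing A] [CommRing B]
    [Algebra R A] [Algebra R B] [Finite σ] (e : MvPolynomial σ A ≃+* B) (h : A →ₐ[R] B)
    (he : ∀ x, e (C x) = h x) {J : Ideal A} (hJ : J.IsPrimary) :
    (J.map h).IsPrimary ∧ (J.map h).radical = J.radical.map h := by
  have hmap : ∀ I : Ideal A, I.map h =
      (I.map (C : A →+* MvPolynomial σ A)).comap (e.symm : B →+* MvPolynomial σ A) := by
    intro I
    have h' : (h : A →+* B) = (e : MvPolynomial σ A →+* B).comp C :=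
      RingHom.ext fun x => (he x).symm
    change I.map (h : A →+* B) = _
    rw [h', ← Ideal.map_map]
    exact (Ideal.comap_symm e).symm
  rw [hmap, hmap]
  exact ⟨(isPrimary_map_C hJ).comap _, by rw [← Ideal.comap_radical, radical_map_C hJ]⟩

/-! ### The Jacobian ideal in two variables -/

theorem pderiv_lin {ℓ : ℕ} (a : Fin ℓ → ℂ) (k : Fin ℓ) : pderiv k (lin a) = C (a k) := by
  classical
  simp only [lin, map_sum, pderiv_C_mul, pderiv_X]
  simp [Pi.single_apply]

theorem aeval_lin {ℓ : ℕ} (a p : Fin ℓ → ℂ) : aeval p (lin a) = ∑ k, a k * p k := by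
  simp [lin]

theorem isHomogeneous_lin {ℓ : ℕ} (a : Fin ℓ → ℂ) : (lin a).IsHomogeneous 1 := by
  refine IsHomogeneous.sum _ _ _ fun k _ => ?_
  simpa using (isHomogeneous_C (Fin ℓ) (a k)).mul (isHomogeneous_X ℂ k)

/-- A product of pairwise non-proportional binary linear forms has no singular point other than the
origin. By Euler's identity, a common zero of the partial derivatives lies on one of the lines;
differentiating the product there shows that it lies on a second one. -/
theorem eq_zero_of_aeval_pderiv_eq_zero {m : ℕ} (hm : 0 < m) (c : Fin m → Fin 2 → ℂ)
    (hc0 : ∀ i, c i ≠ 0) (hc : ∀ i j, i ≠ j → ∀ t : ℂ, c i ≠ t • c j) (p : Fin 2 → ℂ)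
    (hp : ∀ k, aeval p (pderiv k (∏ i, lin (c i))) = 0) : p = 0 := by
  classical
  have hF : aeval p (∏ i, lin (c i)) = 0 := by
    have h := (IsHomogeneous.prod Finset.univ (fun i => lin (c i)) (fun _ => 1)
      fun i _ => isHomogeneous_lin (c i)).sum_X_mul_pderiv
    have h := congrArg (aeval p) h
    simp only [map_sum, map_mul, hp, mul_zero, Finset.sum_const_zero, map_nsmul] at h
    simpa [hm.ne'] using h.symm
  obtain ⟨i, hi⟩ : ∃ i, aeval p (lin (c i)) = 0 := by
    simpa [Finset.prod_eq_zero_iff] using hF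
  obtain ⟨j, hji, hj⟩ : ∃ j, j ≠ i ∧ aeval p (lin (c j)) = 0 := by
    obtain ⟨k, hk⟩ := Function.ne_iff.1 (hc0 i)
    have h := hp k
    rw [← Finset.mul_prod_erase _ _ (Finset.mem_univ i), Derivation.leibniz, pderiv_lin] at h
    have hk' : c i k ≠ 0 := hk
    rw [map_add, smul_eq_mul, smul_eq_mul, map_mul, map_mul, hi, zero_mul, zero_add, map_prod,
      aeval_C, mul_eq_zero, Finset.prod_eq_zero_iff] at h
    obtain ⟨j, hj, hj0⟩ := h.resolve_right (by simpa using hk')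
    exact ⟨j, Finset.ne_of_mem_erase hj, hj0⟩
  -- Two binary forms vanishing at the same `p ≠ 0` are proportional.
  by_contra hp0
  rw [aeval_lin, Fin.sum_univ_two] at hi hj
  have hi0 := hc0 i
  have hj0 := hc0 j
  by_cases h0 : p 0 = 0
  · have h1 : p 1 ≠ 0 := fun h1 => hp0 (by ext k; fin_cases k <;> simp [h0, h1])
    have hi1 : c i 1 = 0 := by simpa [h0, h1] using hi
    have hj1 : c j 1 = 0 := by simpa [h0, h1] using hj
    have hi2 : c i 0 ≠ 0 := fun h => hi0 (by ext k; fin_cases k <;> simp [h, hi1])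
    refine hc j i hji (c j 0 / c i 0) ?_
    ext k; fin_cases k <;> simp [hi1, hj1, hi2]
  · have hi1 : c i 0 = - (c i 1 * p 1) / p 0 := by
      rw [eq_div_iff h0]; linear_combination hi
    have hj1 : c j 0 = - (c j 1 * p 1) / p 0 := by
      rw [eq_div_iff h0]; linear_combination hj
    have hi2 : c i 1 ≠ 0 := fun h => hi0 (by ext k; fin_cases k <;> simp [h, hi1])
    refine hc j i hji (c j 1 / c i 1) ?_
    ext k; fin_cases k
    · simp only [Fin.zero_eta, Pi.smul_apply, smul_eq_mul, hi1, hj1]; field_simp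
    · simp [hi2]

/-- By the Nullstellensatz, the Jacobian ideal of a product of at least two pairwise
non-proportional binary forms has the maximal ideal of the origin as its radical. -/
theorem radical_jac_two {m : ℕ} (hm : 2 ≤ m) (c : Fin m → Fin 2 → ℂ)
    (hc0 : ∀ i, c i ≠ 0) (hc : ∀ i j, i ≠ j → ∀ t : ℂ, c i ≠ t • c j) :
    (jac (∏ i, lin (c i))).radical = vanishingIdeal ℂ {(0 : Fin 2 → ℂ)} := by
  classical
  rw [← vanishingIdeal_zeroLocus_eq_radical (K := ℂ)]
  congr 1
  rw [jac, zeroLocus_span]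
  ext p
  simp only [Set.forall_mem_range, Set.mem_ofPred, Set.mem_singleton_iff]
  refine ⟨eq_zero_of_aeval_pderiv_eq_zero (by omega) c hc0 hc p, ?_⟩
  rintro rfl k
  -- A second factor survives differentiation of the first, and it vanishes at the origin.
  have h01 : (⟨1, by omega⟩ : Fin m) ∈ Finset.univ.erase (⟨0, by omega⟩ : Fin m) := by simp
  rw [← Finset.mul_prod_erase _ _ (Finset.mem_univ (⟨0, by omega⟩ : Fin m)),
    ← Finset.mul_prod_erase _ _ h01, Derivation.leibniz]
  have h0 : ∀ i, aeval (0 : Fin 2 → ℂ) (lin (c i)) = 0 := fun i => by rw [aeval_lin]; simp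
  simp only [smul_eq_mul, map_add, map_mul, h0, zero_mul, add_zero]

theorem vanishingIdeal_zero_two :
    vanishingIdeal ℂ {(0 : Fin 2 → ℂ)} = Ideal.span {X 0, X 1} := by
  apply le_antisymm
  · intro f hf
    rw [mem_vanishingIdeal_singleton_iff] at hf
    have h : (Ideal.span {X 0, X 1} : Ideal (MvPolynomial (Fin 2) ℂ)) =
        Ideal.span (X '' Set.univ) := by
      rw [Set.image_univ]; congr 1; ext; simp [eq_comm]
    rw [h, mem_ideal_span_X_image]
    intro d hd
    by_contra! hd'
    have : d = 0 := by ext i; simpa using hd' i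
    rw [mem_support_iff, this] at hd
    exact hd (by simpa [aeval_zero, constantCoeff_eq] using hf)
  · rw [Ideal.span_le]
    rintro _ (rfl | rfl) <;> simp [mem_vanishingIdeal_iff]

/-! ### Passing from two variables to `ℓ` variables -/

/-- The chain rule for a linear substitution. -/
theorem pderiv_aeval_lin {ℓ : ℕ} (v : Fin 2 → Fin ℓ → ℂ) (F : MvPolynomial (Fin 2) ℂ)
    (k : Fin ℓ) : pderiv k (aeval (fun j => lin (v j)) F) =
      ∑ j, C (v j k) * aeval (fun j => lin (v j)) (pderiv j F) := by
  classical
  induction F using MvPolynomial.induction_on with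
  | C a => simp
  | add p q hp hq => simp only [map_add, hp, hq, mul_add, Finset.sum_add_distrib]
  | mul_X p i hp =>
    simp only [map_mul, aeval_X, Derivation.leibniz, pderiv_lin, hp, pderiv_X, map_add, smul_eq_mul]
    fin_cases i <;> simp [Fin.sum_univ_two] <;> ring

theorem aeval_lin_lin {ℓ : ℕ} (v : Fin 2 → Fin ℓ → ℂ) (c : Fin 2 → ℂ) :
    aeval (fun j => lin (v j)) (lin c) = lin (c 0 • v 0 + c 1 • v 1) := by
  simp only [lin, map_mul, Fin.sum_univ_two, aeval_X, aeval_C, Pi.add_apply,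
    Pi.smul_apply, smul_eq_mul, map_add, algebraMap_eq, Finset.mul_sum, add_mul,
    Finset.sum_add_distrib, mul_assoc]

theorem exists_basis_extending {ℓ : ℕ} {v : Fin 2 → Fin ℓ → ℂ} (hv : LinearIndependent ℂ v) :
    ∃ (n : ℕ) (b : Module.Basis (Fin n ⊕ Fin 2) ℂ (Fin ℓ → ℂ)), ∀ j, b (Sum.inr j) = v j := by
  obtain ⟨W, hW⟩ := (Submodule.span ℂ (Set.range v)).exists_isCompl
  refine ⟨_, ((Module.finBasis ℂ W).prod (Module.Basis.span hv)).map
    (Submodule.prodEquivOfIsCompl _ _ hW.symm), fun j => ?_⟩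
  simp [Module.Basis.span_apply]

/-- For linearly independent forms `lin (v 0)`, `lin (v 1)`, the Jacobian ideal of
`F (lin (v 0), lin (v 1))` is the extension of the Jacobian ideal of `F`. The chain rule gives one
inclusion; the other inverts it by means of functionals dual to `v`. -/
theorem jac_aeval_lin {ℓ : ℕ} {v : Fin 2 → Fin ℓ → ℂ} (hv : LinearIndependent ℂ v)
    (F : MvPolynomial (Fin 2) ℂ) :
    jac (aeval (fun j => lin (v j)) F) =
      (jac F).map (aeval fun j => lin (v j) : MvPolynomial (Fin 2) ℂ →ₐ[ℂ] _) := by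
  classical
  apply le_antisymm
  · refine Ideal.span_le.2 ?_
    rintro _ ⟨k, rfl⟩
    simp only [pderiv_aeval_lin]
    exact Ideal.sum_mem _ fun j _ => Ideal.mul_mem_left _ _
      (Ideal.mem_map_of_mem _ (Ideal.subset_span ⟨j, rfl⟩))
  · rw [jac, Ideal.map_span, Ideal.span_le]
    rintro _ ⟨_, ⟨i, rfl⟩, rfl⟩
    obtain ⟨n, b, hb⟩ := exists_basis_extending hv
    -- The coordinate functional dual to `v i`: it is `1` on `v i` and `0` on the other vector.
    let φ : (Fin ℓ → ℂ) →ₗ[ℂ] ℂ := b.coord (Sum.inr i)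
    have hφ : ∀ j, ∑ k, v j k * φ (Pi.single k 1) = if j = i then 1 else 0 := by
      intro j
      have h := LinearMap.pi_apply_eq_sum_univ φ (v j)
      rw [← hb j, Module.Basis.coord_apply, Module.Basis.repr_self, Finsupp.single_apply] at h
      simp only [Sum.inr.injEq] at h
      rw [← hb j, h]
      refine Finset.sum_congr rfl fun k _ => ?_
      rw [smul_eq_mul]
      congr 2
      ext l
      simp [Pi.single_apply, eq_comm]
    have h : aeval (fun j => lin (v j)) (pderiv i F) =
        ∑ k, C (φ (Pi.single k 1)) * pderiv k (aeval (fun j => lin (v j)) F) := by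
      simp only [pderiv_aeval_lin, Finset.mul_sum]
      rw [Finset.sum_comm]
      simp only [← mul_assoc, ← C_mul, ← Finset.sum_mul]
      simp only [mul_comm (φ _), ← map_sum, hφ]
      simp
    simp only [SetLike.mem_coe]
    erw [h]
    exact Ideal.sum_mem _ fun k _ => Ideal.mul_mem_left _ _ (Ideal.subset_span ⟨k, rfl⟩)

/-- Substituting linearly independent forms makes the polynomial ring in `ℓ` variables a polynomial
ring over the one in two variables: complete the forms to a basis of all linear forms, and identify
both polynomial rings with the symmetric algebra. -/
theorem exists_ringEquiv_comp_C {ℓ : ℕ} {v : Fin 2 → Fin ℓ → ℂ} (hv : LinearIndependent ℂ v) :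
    ∃ (n : ℕ) (Ψ : MvPolynomial (Fin n) (MvPolynomial (Fin 2) ℂ) ≃+* MvPolynomial (Fin ℓ) ℂ),
      ∀ F, Ψ (C F) = aeval (fun j => lin (v j)) F := by
  obtain ⟨n, b, hb⟩ := exists_basis_extending hv
  let Ψ := ((sumAlgEquiv ℂ (Fin n) (Fin 2)).symm.trans
    (SymmetricAlgebra.equivMvPolynomial b).symm).trans
      (SymmetricAlgebra.equivMvPolynomial (Pi.basisFun ℂ (Fin ℓ)))
  have hι : ∀ w : Fin ℓ → ℂ, SymmetricAlgebra.equivMvPolynomial (Pi.basisFun ℂ (Fin ℓ))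
      (SymmetricAlgebra.ι ℂ _ w) = lin w := by
    intro w
    conv_lhs => rw [← (Pi.basisFun ℂ (Fin ℓ)).sum_repr w]
    simp only [map_sum, map_smul, SymmetricAlgebra.equivMvPolynomial_ι_apply, lin,
      smul_eq_C_mul, Pi.basisFun_repr]
  refine ⟨n, Ψ.toRingEquiv, fun F => ?_⟩
  have : Ψ.toAlgHom.comp (IsScalarTower.toAlgHom ℂ (MvPolynomial (Fin 2) ℂ) _) =
      aeval fun j => lin (v j) := by
    ext1 j
    simp [Ψ, algebraMap_eq, hb, hι]
  exact DFunLike.congr_fun this F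

/-- If all the (pairwise non-proportional, nonzero) linear forms `α_1, …, α_m` lie in the
two-dimensional span of `α_1` and `α_2`, then the Jacobian ideal of their product is a
primary ideal with radical the prime `(α_1, α_2)`. -/
theorem jacobian_of_rank_two_arrangement_isPrimary
    {ℓ m : ℕ} (hℓ : 2 ≤ ℓ) (hm : 2 ≤ m)
    (a : Fin m → Fin ℓ → ℂ)
    (ha0 : ∀ i, a i ≠ 0)
    (haprop : ∀ i j, i ≠ j → ∀ c : ℂ, a i ≠ c • a j)
    (hspan : ∀ i, a i ∈ Submodule.span ℂ
      ({a ⟨0, by omega⟩, a ⟨1, by omega⟩} : Set (Fin ℓ → ℂ))) :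
    (jac (∏ i, lin (a i))).IsPrimary ∧
      (jac (∏ i, lin (a i))).radical =
        Ideal.span ({lin (a ⟨0, by omega⟩), lin (a ⟨1, by omega⟩)} :
          Set (MvPolynomial (Fin ℓ) ℂ)) := by
  let v : Fin 2 → Fin ℓ → ℂ := ![a ⟨0, by omega⟩, a ⟨1, by omega⟩]
  have hv : LinearIndependent ℂ v := by
    rw [LinearIndependent.pair_iff' (ha0 _)]
    exact fun t ht => haprop ⟨1, by omega⟩ ⟨0, by omega⟩ (by simp) t ht.symm
  have hex : ∀ i, ∃ c : Fin 2 → ℂ, a i = c 0 • v 0 + c 1 • v 1 := fun i => by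
    obtain ⟨s, t, h⟩ := Submodule.mem_span_pair.1 (hspan i)
    exact ⟨![s, t], h.symm⟩
  -- `c i` is the coefficient vector of the `i`-th form in terms of the first two.
  choose c hc using hex
  have hc0 : ∀ i, c i ≠ 0 := fun i h => ha0 i (by simp [hc i, h])
  have hcprop : ∀ i j, i ≠ j → ∀ t : ℂ, c i ≠ t • c j := fun i j hij t h =>
    haprop i j hij t (by simp [hc i, hc j, h, mul_smul])
  obtain ⟨n, Ψ, hΨ⟩ := exists_ringEquiv_comp_C hv
  set J := jac (∏ i, lin (c i)) with hJ
  have hrad : J.radical = Ideal.span {X 0, X 1} := by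
    rw [hJ, radical_jac_two hm c hc0 hcprop, vanishingIdeal_zero_two]
  have hprim : J.IsPrimary := by
    apply Ideal.isPrimary_of_isMaximal_radical
    rw [hJ, radical_jac_two hm c hc0 hcprop]
    exact isMaximal_iff_eq_vanishingIdeal_singleton.2 ⟨0, rfl⟩
  have hjac : jac (∏ i, lin (a i)) =
      J.map (aeval fun j => lin (v j) : MvPolynomial (Fin 2) ℂ →ₐ[ℂ] _) := by
    rw [hJ, ← jac_aeval_lin hv, map_prod]
    simp only [aeval_lin_lin, ← hc]
  obtain ⟨h1, h2⟩ := isPrimary_map_of_ringEquiv Ψ _ hΨ hprim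
  rw [hjac]
  refine ⟨h1, ?_⟩
  rw [h2, hrad, Ideal.map_span, Set.image_pair]
  simp [v]
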